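/- arXiv:1412.7457 — 7 statements merged into one kernel-verified Lean document; each statement's English description precedes it below -/
import Mathlib

section
/- Let f : ℝ^n → ℝ be convex and continuously differentiable with L-Lipschitz continuous gradient (L > 0), and let x* be a minimizer of f with f* = f(x*). Let β ∈ [0,1) and α ∈ (0, (1-β)/L]. Let {x_k} be generated by the Heavy-ball iteration x_{k+1} = x_k - α∇f(x_k) + β(x_k - x_{k-1}) with initialization x_{-1} = x_0. Then for every T ∈ ℕ, the Cesàro average x̄_T = (1/(T+1)) Σ_{k=0}^{T} x_k satisfies f(x̄_T) - f* ≤ (‖x_0 - x*‖² / (2(T+1))) · (Lβ/(1-β) + (1-β)/α). -/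
/-!
The proof is a Lyapunov argument. With `c = β / (1 - β)` and `p k = c • (x k - x (k - 1))`, the
Heavy-ball recursion becomes the plain gradient-type step
`x (k + 1) + p (k + 1) = x k + p k - (α / (1 - β)) • f' (x k)`.
Expanding `‖x (k + 1) + p (k + 1) - xstar‖ ^ 2` produces the inner products of `f' (x k)` with
`x k - xstar` and with `x k - x (k - 1)`. Since `xstar` minimizes `f`, the first is at least
`f (x k) - f xstar + ‖f' (x k)‖ ^ 2 / (2 * L)` (`gap_add_sq_gradient_le_inner`); by convexity, the
second is at least `f (x k) - f (x (k - 1))` (`add_inner_gradient_le`). The condition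
`α ≤ (1 - β) / L` says exactly that the remaining terms in `‖f' (x k)‖ ^ 2` have the right sign
(`lyapunov_step`). Summing over `k` telescopes; the initial gap `f (x 0) - f xstar` is at most
`L / 2 * ‖x 0 - xstar‖ ^ 2` by the descent lemma, and Jensen's inequality passes from the average
of the values to the value at the average.
-/

open scoped RealInnerProductSpace

section Smooth

variable {E : Type*} [NormedAddCommGroup E] [InnerProductSpace ℝ E] [CompleteSpace E]
  {f : E → ℝ} {f' : E → E} {L : ℝ}

lemma hasDerivAt_comp_line (hgrad : ∀ z, HasGradientAt f (f' z) z) (z d : E) (t : ℝ) :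
    HasDerivAt (fun s : ℝ => f (z + s • d)) ⟪f' (z + t • d), d⟫ t := by
  have h1 : HasDerivAt (fun s : ℝ => z + s • d) d t := by
    simpa using ((hasDerivAt_id t).smul_const d).const_add z
  simpa [Function.comp_def] using (hgrad (z + t • d)).hasFDerivAt.comp_hasDerivAt t h1

/-- A convex function lies above its tangent hyperplanes. -/
lemma add_inner_gradient_le (hconv : ConvexOn ℝ Set.univ f)
    (hgrad : ∀ z, HasGradientAt f (f' z) z) (z w : E) :
    f z + ⟪f' z, w - z⟫ ≤ f w := by
  have hc : ConvexOn ℝ Set.univ (fun s : ℝ => f (z + s • (w - z))) := by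
    have h := hconv.comp_affineMap (AffineMap.lineMap z w)
    rw [Set.preimage_univ] at h
    refine h.congr fun s _ => ?_
    simp [AffineMap.lineMap_apply, add_comm]
  have h := hc.le_slope_of_hasDerivAt (Set.mem_univ (0 : ℝ)) (Set.mem_univ (1 : ℝ)) zero_lt_one
    (hasDerivAt_comp_line hgrad z (w - z) 0)
  simp [slope_def_field] at h
  linarith

/-- The descent lemma: a Lipschitz gradient gives a quadratic upper bound. -/
lemma le_quadratic (hgrad : ∀ z, HasGradientAt f (f' z) z)
    (hlip : ∀ z w, ‖f' z - f' w‖ ≤ L * ‖z - w‖) (z w : E) :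
    f w ≤ f z + ⟪f' z, w - z⟫ + L / 2 * ‖w - z‖ ^ 2 := by
  set d := w - z with hd
  -- Along the segment from `z` to `w`, `f` minus its quadratic bound has nonpositive derivative.
  have hder : ∀ t : ℝ, HasDerivAt
      (fun s : ℝ => f (z + s • d) - (s * ⟪f' z, d⟫ + s ^ 2 * (L / 2 * ‖d‖ ^ 2)))
      (⟪f' (z + t • d), d⟫ - (1 * ⟪f' z, d⟫ + (2 * t) * (L / 2 * ‖d‖ ^ 2))) t := by
    intro t
    refine (hasDerivAt_comp_line hgrad z d t).sub
      (((hasDerivAt_id t).mul_const _).add (HasDerivAt.mul_const ?_ _))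
    simpa using hasDerivAt_pow 2 t
  have hanti := antitoneOn_of_deriv_nonpos (convex_Icc (0 : ℝ) 1)
    (fun t _ => (hder t).continuousAt.continuousWithinAt)
    (fun t _ => (hder t).differentiableAt.differentiableWithinAt)
    (fun t ht => by
      rw [interior_Icc] at ht
      rw [(hder t).deriv]
      have h1 : ⟪f' (z + t • d) - f' z, d⟫ ≤ ‖f' (z + t • d) - f' z‖ * ‖d‖ :=
        real_inner_le_norm _ _
      have h2 := hlip (z + t • d) z
      rw [add_sub_cancel_left, norm_smul, Real.norm_of_nonneg ht.1.le] at h2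
      have h3 := mul_le_mul_of_nonneg_right h2 (norm_nonneg d)
      rw [inner_sub_left] at h1
      nlinarith)
  have h := hanti (Set.left_mem_Icc.2 zero_le_one) (Set.right_mem_Icc.2 zero_le_one) zero_le_one
  have hw : z + d = w := by rw [hd]; abel
  simp [hw] at h
  linarith

lemma gradient_eq_zero_of_forall_le (hgrad : ∀ z, HasGradientAt f (f' z) z) {m : E}
    (hmin : ∀ z, f m ≤ f z) : f' m = 0 := by
  have h := IsLocalMin.hasFDerivAt_eq_zero (Filter.Eventually.of_forall hmin)
    (hgrad m).hasFDerivAt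
  simpa using h

/-- The convexity inequality at a minimizer, improved by a gradient term. -/
lemma gap_add_sq_gradient_le_inner (hL : 0 < L) (hconv : ConvexOn ℝ Set.univ f)
    (hgrad : ∀ z, HasGradientAt f (f' z) z)
    (hlip : ∀ z w, ‖f' z - f' w‖ ≤ L * ‖z - w‖) {m : E} (hmin : ∀ z, f m ≤ f z) (z : E) :
    f z - f m + ‖f' z‖ ^ 2 / (2 * L) ≤ ⟪f' z, z - m⟫ := by
  -- Compare the tangent at `z` with the quadratic bound at `m`, both evaluated where the
  -- difference of the two bounds is extremal.
  have h1 := add_inner_gradient_le hconv hgrad z (m + (1 / L) • f' z)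
  have h2 := le_quadratic hgrad hlip m (m + (1 / L) • f' z)
  rw [gradient_eq_zero_of_forall_le hgrad hmin, inner_zero_left, add_sub_cancel_left, norm_smul,
    Real.norm_of_nonneg (by positivity)] at h2
  rw [show m + (1 / L) • f' z - z = (1 / L) • f' z - (z - m) by abel, inner_sub_right,
    inner_smul_right, real_inner_self_eq_norm_sq] at h1
  have e1 : L / 2 * (1 / L * ‖f' z‖) ^ 2 = ‖f' z‖ ^ 2 / (2 * L) := by field_simp
  have e2 : 1 / L * ‖f' z‖ ^ 2 = ‖f' z‖ ^ 2 / (2 * L) + ‖f' z‖ ^ 2 / (2 * L) := by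
    field_simp; norm_num
  linarith

/-- One-step decrease of the Lyapunov function, for consecutive iterates `u`, `v`
(where `v` is the current one) and the next iterate `v - α • f' v + β • (v - u)`. -/
lemma lyapunov_step (hL : 0 < L) (hconv : ConvexOn ℝ Set.univ f)
    (hgrad : ∀ z, HasGradientAt f (f' z) z)
    (hlip : ∀ z w, ‖f' z - f' w‖ ≤ L * ‖z - w‖) {m : E} (hmin : ∀ z, f m ≤ f z)
    {α β : ℝ} (hβ0 : 0 ≤ β) (hβ1 : β < 1) (hα0 : 0 < α) (hα1 : α ≤ (1 - β) / L)
    {u v w : E} (hw : w = v - α • f' v + β • (v - u)) :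
    2 * (α / (1 - β)) * (f v - f m) + 2 * (α / (1 - β)) * (β / (1 - β)) * (f v - f u) ≤
      ‖v + (β / (1 - β)) • (v - u) - m‖ ^ 2 - ‖w + (β / (1 - β)) • (w - v) - m‖ ^ 2 := by
  have hβ : 0 < 1 - β := by linarith
  set c := β / (1 - β) with hc
  set γ := α / (1 - β) with hγ
  have hc0 : 0 ≤ c := by positivity
  have hγ0 : 0 < γ := by positivity
  have hγL : γ ≤ 1 / L := by
    rw [hγ, div_le_div_iff₀ hβ hL]
    rw [le_div_iff₀ hL] at hα1
    linarith
  have hstep : w + c • (w - v) - m = (v + c • (v - u) - m) - γ • f' v := by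
    have e1 : (1 + c) * α = γ := by rw [hc, hγ]; field_simp; ring
    have e2 : (1 + c) * β = c := by rw [hc]; field_simp; ring
    calc w + c • (w - v) - m
        = v + ((1 + c) * β) • (v - u) - m - ((1 + c) * α) • f' v := by rw [hw]; module
      _ = _ := by rw [e1, e2]
  have hexp : ‖w + c • (w - v) - m‖ ^ 2 = ‖v + c • (v - u) - m‖ ^ 2
      - 2 * γ * (⟪f' v, v - m⟫ + c * ⟪f' v, v - u⟫) + γ ^ 2 * ‖f' v‖ ^ 2 := by
    have e : ⟪v + c • (v - u) - m, f' v⟫ = ⟪f' v, v - m⟫ + c * ⟪f' v, v - u⟫ := by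
      rw [real_inner_comm, show v + c • (v - u) - m = (v - m) + c • (v - u) by abel,
        inner_add_right, inner_smul_right]
    rw [hstep, norm_sub_sq_real, inner_smul_right, e, norm_smul, Real.norm_of_nonneg hγ0.le]
    ring
  have h1 := gap_add_sq_gradient_le_inner hL hconv hgrad hlip hmin v
  have h2 : f v - f u ≤ ⟪f' v, v - u⟫ := by
    have h := add_inner_gradient_le hconv hgrad v u
    rw [← neg_sub v u, inner_neg_right] at h
    linarith
  have h3 : γ ^ 2 * ‖f' v‖ ^ 2 ≤ 2 * γ * (‖f' v‖ ^ 2 / (2 * L)) := by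
    have h := mul_le_mul_of_nonneg_left hγL (mul_nonneg hγ0.le (sq_nonneg ‖f' v‖))
    have e : 2 * γ * (‖f' v‖ ^ 2 / (2 * L)) = γ * ‖f' v‖ ^ 2 * (1 / L) := by field_simp
    rw [e]
    linarith
  have h4 := mul_le_mul_of_nonneg_left
    (add_le_add h1 (mul_le_mul_of_nonneg_left h2 hc0)) (mul_nonneg zero_le_two hγ0.le)
  rw [hexp]
  linarith

end Smooth

/-- Theorem 1 (case α ∈ (0, (1-β)/L]): Cesàro averages of the Heavy-ball iterates
converge at rate O(1/T). -/
theorem heavy_ball_cesaro_small_step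
    {n : ℕ} (f : EuclideanSpace ℝ (Fin n) → ℝ)
    (f' : EuclideanSpace ℝ (Fin n) → EuclideanSpace ℝ (Fin n))
    (L : ℝ) (hL : 0 < L)
    (hconv : ConvexOn ℝ Set.univ f)
    (hC1 : ContDiff ℝ 1 f)
    (hgrad : ∀ z, HasGradientAt f (f' z) z)
    (hlip : ∀ z w, ‖f' z - f' w‖ ≤ L * ‖z - w‖)
    (xstar : EuclideanSpace ℝ (Fin n)) (hmin : ∀ z, f xstar ≤ f z)
    (α β : ℝ) (hβ0 : 0 ≤ β) (hβ1 : β < 1)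
    (hα0 : 0 < α) (hα1 : α ≤ (1 - β) / L)
    (x : ℤ → EuclideanSpace ℝ (Fin n))
    (hinit : x (-1) = x 0)
    (hiter : ∀ k : ℤ, 0 ≤ k →
      x (k + 1) = x k - α • f' (x k) + β • (x k - x (k - 1)))
    (T : ℕ) :
    f ((1 / (T + 1) : ℝ) • ∑ k ∈ Finset.range (T + 1), x (k : ℤ)) - f xstar ≤
      ‖x 0 - xstar‖ ^ 2 / (2 * (T + 1)) * (L * β / (1 - β) + (1 - β) / α) := by
  have hβ : 0 < 1 - β := by linarith
  set c := β / (1 - β) with hc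
  set γ := α / (1 - β) with hγ
  have hc0 : 0 ≤ c := by positivity
  have hγ0 : 0 < γ := by positivity
  set S := ∑ k ∈ Finset.range (T + 1), (f (x (k : ℤ)) - f xstar) with hS
  -- Telescoped form of the Lyapunov decrease.
  have hsum : ∀ N : ℕ, 2 * γ * ∑ k ∈ Finset.range N, (f (x (k : ℤ)) - f xstar)
      + 2 * γ * c * (f (x ((N : ℤ) - 1)) - f (x 0))
      ≤ ‖x 0 - xstar‖ ^ 2
        - ‖x N + c • (x N - x ((N : ℤ) - 1)) - xstar‖ ^ 2 := by
    intro N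
    induction N with
    | zero => simp [hinit]
    | succ N ih =>
      have h := lyapunov_step hL hconv hgrad hlip hmin hβ0 hβ1 hα0 hα1
        (hiter N (Int.natCast_nonneg N))
      rw [← hc, ← hγ] at h
      rw [Finset.sum_range_succ]
      push_cast
      rw [add_sub_cancel_right]
      linarith
  -- The telescoped term `f (x T) - f (x 0)` may be negative; it costs at most the initial gap.
  have hgap : f (x 0) - f xstar ≤ L / 2 * ‖x 0 - xstar‖ ^ 2 := by
    have h := le_quadratic hgrad hlip xstar (x 0)
    rw [gradient_eq_zero_of_forall_le hgrad hmin, inner_zero_left] at h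
    linarith
  have hSle : 2 * γ * S ≤ ‖x 0 - xstar‖ ^ 2 * (1 + γ * c * L) := by
    have h := hsum (T + 1)
    push_cast at h
    rw [add_sub_cancel_right, ← hS] at h
    have h1 : f (x 0) - f (x T) ≤ L / 2 * ‖x 0 - xstar‖ ^ 2 := by
      linarith [hmin (x T)]
    have h2 := mul_le_mul_of_nonneg_left h1 (by positivity : 0 ≤ 2 * γ * c)
    have h3 := sq_nonneg ‖x ((T : ℤ) + 1) + c • (x ((T : ℤ) + 1) - x T) - xstar‖
    linarith
  have hT : (0 : ℝ) < T + 1 := by positivity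
  have hjensen : f ((1 / (T + 1) : ℝ) • ∑ k ∈ Finset.range (T + 1), x (k : ℤ)) - f xstar
      ≤ 1 / (T + 1) * S := by
    have h := hconv.map_sum_le (t := Finset.range (T + 1)) (w := fun _ => (1 / (T + 1) : ℝ))
      (p := fun k : ℕ => x (k : ℤ)) (fun _ _ => by positivity)
      (by simp; field_simp) (fun _ _ => Set.mem_univ _)
    rw [← Finset.smul_sum, ← Finset.smul_sum, smul_eq_mul] at h
    have e : 1 / (T + 1) * S
        = 1 / (T + 1) * ∑ k ∈ Finset.range (T + 1), f (x (k : ℤ)) - f xstar := by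
      rw [hS, Finset.sum_sub_distrib]
      simp
      field_simp
    linarith
  refine hjensen.trans ?_
  have hS' : S ≤ ‖x 0 - xstar‖ ^ 2 * (1 + γ * c * L) / (2 * γ) := by
    rw [le_div_iff₀ (by positivity)]
    linarith
  calc 1 / (T + 1) * S
      ≤ 1 / (T + 1) * (‖x 0 - xstar‖ ^ 2 * (1 + γ * c * L) / (2 * γ)) := by gcongr
    _ = ‖x 0 - xstar‖ ^ 2 / (2 * (T + 1)) * (L * β / (1 - β) + (1 - β) / α) := by
      rw [hc, hγ]
      field_simp
      ring
end

section
/- Let f : ℝ^n → ℝ be convex and continuously differentiable with L-Lipschitz continuous gradient (L > 0), let x* be a minimizer of f with f* = f(x*), and fix ᾱ ∈ (0, 1/L]. Set β = 1 - √(ᾱL) and let {x_k} be generated by the Heavy-ball iteration x_{k+1} = x_k - ᾱ∇f(x_k) + β(x_k - x_{k-1}) with x_{-1} = x_0. Then for all T ∈ ℕ, min_{0 ≤ k ≤ T} f(x_k) - f* ≤ (1/(2(T+1))) · ((2√(ᾱL) - ᾱL)/ᾱ) · ‖x_0 - x*‖². -/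
open scoped RealInnerProductSpace

/-!
Write `s = √(aL)`, so that `β = 1 - s`. The vectors `w k = s • (x k - x⋆) + β • (x k - x (k - 1))`
turn the Heavy-ball method into a gradient step, `w (k + 1) = w k - a • ∇f (x k)`. Expanding
`‖w (k + 1)‖²` and bounding the two inner products by

* `f (x k) - f x⋆ + ‖∇f (x k)‖² / (2L) ≤ ⟪∇f (x k), x k - x⋆⟫` (`gap_add_le_inner`),
* `f (x k) - f (x (k - 1)) ≤ ⟪∇f (x k), x k - x (k - 1)⟫` (convexity),

the terms in `‖∇f (x k)‖²` have total coefficient `a² - a s / L ≤ 0`, because `aL = s² ≤ s`. Hence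
`‖w k‖² + 2 a β f (x (k - 1))` decreases by at least `2 a s (f (x k) - f x⋆)` at each step.
Telescoping, together with `f (x 0) - f x⋆ ≤ L / 2 * ‖x 0 - x⋆‖²`, bounds
`∑ k ≤ T, (f (x k) - f x⋆)` by `(2 s - s²) / (2 a) * ‖x 0 - x⋆‖²`, and some term is at most the
average.
-/

section FirstOrder

variable {E : Type*} [NormedAddCommGroup E] [InnerProductSpace ℝ E] [CompleteSpace E]
  {f : E → ℝ} {f' : E → E}

lemma hasDerivAt_along_line (hgrad : ∀ z, HasGradientAt f (f' z) z) (y v : E) (t : ℝ) :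
    HasDerivAt (fun t : ℝ => f (y + t • v)) ⟪f' (y + t • v), v⟫ t := by
  have h1 : HasDerivAt (fun t : ℝ => y + t • v) v t := by
    simpa using ((hasDerivAt_id t).smul_const v).const_add y
  simpa [Function.comp_def] using (hgrad (y + t • v)).hasFDerivAt.comp_hasDerivAt t h1

lemma convex_gradient_inequality (hconv : ConvexOn ℝ Set.univ f)
    (hgrad : ∀ z, HasGradientAt f (f' z) z) (y z : E) :
    f y + ⟪f' y, z - y⟫ ≤ f z := by
  have hc : ConvexOn ℝ Set.univ (fun t : ℝ => f (y + t • (z - y))) := by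
    have := hconv.comp_affineMap (AffineMap.lineMap y z : ℝ →ᵃ[ℝ] E)
    simpa [Function.comp_def, AffineMap.lineMap_apply, add_comm] using this
  have hd := hasDerivAt_along_line hgrad y (z - y) 0
  have h := hc.le_slope_of_hasDerivAt (Set.mem_univ 0) (Set.mem_univ 1) one_pos hd
  simp [slope_def_field] at h
  linarith

lemma gap_le_at_minimizer {L : ℝ} (hgrad : ∀ z, HasGradientAt f (f' z) z)
    (hlip : ∀ z w, ‖f' z - f' w‖ ≤ L * ‖z - w‖) {m : E} (hmin : ∀ z, f m ≤ f z) (z : E) :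
    f z - f m ≤ L / 2 * ‖z - m‖ ^ 2 := by
  have h0 : f' m = 0 := by
    have hl : IsLocalMin f m := Filter.Eventually.of_forall hmin
    simpa using hl.hasFDerivAt_eq_zero (hgrad m).hasFDerivAt
  set v := z - m with hv
  -- On `[0, 1]` the quadratic upper model minus `f` is nondecreasing along the segment.
  have hd : ∀ t : ℝ, HasDerivAt (fun t : ℝ => L / 2 * ‖v‖ ^ 2 * t ^ 2 - f (m + t • v))
      (L * ‖v‖ ^ 2 * t - ⟪f' (m + t • v), v⟫) t := fun t =>
    (((hasDerivAt_pow 2 t).const_mul (L / 2 * ‖v‖ ^ 2)).sub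
      (hasDerivAt_along_line hgrad m v t)).congr_deriv (by push_cast; ring)
  have hm : MonotoneOn (fun t : ℝ => L / 2 * ‖v‖ ^ 2 * t ^ 2 - f (m + t • v))
      (Set.Icc 0 1) := by
    refine monotoneOn_of_deriv_nonneg (convex_Icc 0 1)
      (fun t _ => (hd t).continuousAt.continuousWithinAt)
      (fun t _ => (hd t).differentiableAt.differentiableWithinAt) fun t ht => ?_
    rw [interior_Icc] at ht
    rw [(hd t).deriv]
    have h1 : ‖f' (m + t • v)‖ ≤ L * (t * ‖v‖) := by
      simpa [h0, norm_smul, abs_of_pos ht.1] using hlip (m + t • v) m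
    have h2 := real_inner_le_norm (f' (m + t • v)) v
    nlinarith [mul_le_mul_of_nonneg_right h1 (norm_nonneg v)]
  have h := hm (Set.left_mem_Icc.2 zero_le_one) (Set.right_mem_Icc.2 zero_le_one) zero_le_one
  simp [hv] at h
  linarith

/-- Cocoercivity at a minimizer `m`: the gradient inequality gains the term
`‖∇f y‖² / (2L)`. -/
lemma gap_add_le_inner {L : ℝ} (hL : 0 < L) (hconv : ConvexOn ℝ Set.univ f)
    (hgrad : ∀ z, HasGradientAt f (f' z) z)
    (hlip : ∀ z w, ‖f' z - f' w‖ ≤ L * ‖z - w‖) {m : E} (hmin : ∀ z, f m ≤ f z) (y : E) :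
    f y - f m + 1 / (2 * L) * ‖f' y‖ ^ 2 ≤ ⟪f' y, y - m⟫ := by
  -- Compare the linear lower bound at `y` and the quadratic upper bound at `m` in the point
  -- `m + L⁻¹ • ∇f y`, where the difference of the two is extremal.
  have h1 := convex_gradient_inequality hconv hgrad y (m + L⁻¹ • f' y)
  have h2 := gap_le_at_minimizer hgrad hlip hmin (m + L⁻¹ • f' y)
  have e1 : ⟪f' y, m + L⁻¹ • f' y - y⟫ = L⁻¹ * ‖f' y‖ ^ 2 - ⟪f' y, y - m⟫ := by
    rw [show m + L⁻¹ • f' y - y = L⁻¹ • f' y - (y - m) by abel, inner_sub_right,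
      real_inner_smul_right, real_inner_self_eq_norm_sq]
  have e2 : L / 2 * ‖m + L⁻¹ • f' y - m‖ ^ 2 = 1 / (2 * L) * ‖f' y‖ ^ 2 := by
    rw [add_sub_cancel_left, norm_smul, Real.norm_of_nonneg (inv_pos.2 hL).le]
    field_simp
  have e3 : L⁻¹ * ‖f' y‖ ^ 2 = 2 * (1 / (2 * L) * ‖f' y‖ ^ 2) := by
    field_simp
  linarith

end FirstOrder

/-- With the optimized momentum parameter β = 1 - √(ᾱL), the minimum function value
among the first T+1 Heavy-ball iterates satisfies an explicit O(1/T) bound. -/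
theorem heavy_ball_min_value_optimal_beta
    {n : ℕ} (f : EuclideanSpace ℝ (Fin n) → ℝ)
    (f' : EuclideanSpace ℝ (Fin n) → EuclideanSpace ℝ (Fin n))
    (L : ℝ) (hL : 0 < L)
    (hconv : ConvexOn ℝ Set.univ f)
    (hC1 : ContDiff ℝ 1 f)
    (hgrad : ∀ z, HasGradientAt f (f' z) z)
    (hlip : ∀ z w, ‖f' z - f' w‖ ≤ L * ‖z - w‖)
    (xstar : EuclideanSpace ℝ (Fin n)) (hmin : ∀ z, f xstar ≤ f z)
    (a β : ℝ) (ha0 : 0 < a) (ha1 : a ≤ 1 / L)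
    (hβ : β = 1 - Real.sqrt (a * L))
    (x : ℤ → EuclideanSpace ℝ (Fin n))
    (hinit : x (-1) = x 0)
    (hiter : ∀ k : ℤ, 0 ≤ k →
      x (k + 1) = x k - a • f' (x k) + β • (x k - x (k - 1)))
    (T : ℕ) :
    ∃ k ≤ T, f (x (k : ℤ)) - f xstar ≤
      1 / (2 * (T + 1)) * ((2 * Real.sqrt (a * L) - a * L) / a) *
        ‖x 0 - xstar‖ ^ 2 := by
  set s := Real.sqrt (a * L) with hs
  have haL : 0 < a * L := mul_pos ha0 hL
  have hs0 : 0 < s := Real.sqrt_pos.2 haL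
  have hsq : s ^ 2 = a * L := Real.sq_sqrt haL.le
  have haL1 : a * L ≤ 1 := (le_div_iff₀ hL).1 ha1
  have hs1 : s ≤ 1 := by nlinarith
  have hβ0 : 0 ≤ β := by linarith
  set w : ℤ → EuclideanSpace ℝ (Fin n) :=
    fun k => s • (x k - xstar) + β • (x k - x (k - 1)) with hw
  have hstep : ∀ k : ℤ, 0 ≤ k →
      2 * a * s * (f (x k) - f xstar) + 2 * a * β * (f (x k) - f (x (k - 1)))
        + ‖w (k + 1)‖ ^ 2 ≤ ‖w k‖ ^ 2 := by
    intro k hk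
    have hrec : w (k + 1) = w k - a • f' (x k) := by
      simp only [hw, add_sub_cancel_right]
      rw [hiter k hk, hβ]
      module
    have h1 := gap_add_le_inner hL hconv hgrad hlip hmin (x k)
    have h2 := convex_gradient_inequality hconv hgrad (x k) (x (k - 1))
    rw [← neg_sub (x k) (x (k - 1)), inner_neg_right] at h2
    have hinner : ⟪w k, a • f' (x k)⟫ = a * (s * ⟪f' (x k), x k - xstar⟫
        + β * ⟪f' (x k), x k - x (k - 1)⟫) := by
      rw [real_inner_smul_right, real_inner_comm, inner_add_right, real_inner_smul_right,
        real_inner_smul_right]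
    rw [hrec, norm_sub_sq_real, hinner, norm_smul, Real.norm_of_nonneg ha0.le, mul_pow]
    have h3 : a ^ 2 * ‖f' (x k)‖ ^ 2 ≤ 2 * a * s * (1 / (2 * L) * ‖f' (x k)‖ ^ 2) := by
      have : a ≤ s / L := by
        rw [le_div_iff₀ hL]
        nlinarith
      calc a ^ 2 * ‖f' (x k)‖ ^ 2 = a * a * ‖f' (x k)‖ ^ 2 := by ring
        _ ≤ a * (s / L) * ‖f' (x k)‖ ^ 2 := by gcongr
        _ = _ := by field_simp
    have h1' := mul_le_mul_of_nonneg_left h1 (by positivity : 0 ≤ 2 * a * s)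
    have h2' := mul_le_mul_of_nonneg_left h2 (by positivity : 0 ≤ 2 * a * β)
    linarith
  have hsum : ∀ N : ℕ, 2 * a * s * ∑ k ∈ Finset.range N, (f (x (k : ℤ)) - f xstar)
      + 2 * a * β * (f (x ((N : ℤ) - 1)) - f (x 0)) + ‖w N‖ ^ 2
        ≤ s ^ 2 * ‖x 0 - xstar‖ ^ 2 := by
    intro N
    induction N with
    | zero => simp [hw, hinit, norm_smul, mul_pow]
    | succ N ih =>
      have h := hstep N (Int.natCast_nonneg N)
      rw [Finset.sum_range_succ]
      push_cast
      rw [add_sub_cancel_right]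
      linarith
  by_contra! hcon
  set B := 1 / (2 * ((T : ℝ) + 1)) * ((2 * s - a * L) / a) * ‖x 0 - xstar‖ ^ 2 with hB
  have hlt : ((T : ℝ) + 1) * B < ∑ k ∈ Finset.range (T + 1), (f (x (k : ℤ)) - f xstar) := by
    have h := Finset.sum_lt_sum_of_nonempty (s := Finset.range (T + 1)) (by simp)
      (fun k hk => hcon k (Nat.lt_succ_iff.1 (Finset.mem_range.1 hk)))
    simpa using h
  have h1 := hsum (T + 1)
  have h2 := mul_le_mul_of_nonneg_left (gap_le_at_minimizer hgrad hlip hmin (x 0))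
    (by positivity : 0 ≤ 2 * a * β)
  have h3 := mul_le_mul_of_nonneg_left (hmin (x (((T + 1 : ℕ) : ℤ) - 1)))
    (by positivity : 0 ≤ 2 * a * β)
  have h4 := mul_lt_mul_of_pos_left hlt (by positivity : 0 < 2 * a * s)
  have h5 : 2 * a * s * (((T : ℝ) + 1) * B)
      = s ^ 2 * ‖x 0 - xstar‖ ^ 2 + 2 * a * β * (L / 2 * ‖x 0 - xstar‖ ^ 2) := by
    have : 2 * a * s * (((T : ℝ) + 1) * B) = s * (2 * s - a * L) * ‖x 0 - xstar‖ ^ 2 := by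
      rw [hB]
      field_simp
    rw [this, hβ]
    linear_combination ‖x 0 - xstar‖ ^ 2 * hsq
  have h6 := sq_nonneg ‖w ((T + 1 : ℕ) : ℤ)‖
  linarith
end

section
/- Let f : ℝ^n → ℝ be convex and continuously differentiable with L-Lipschitz continuous gradient (L > 0), let x* be a minimizer of f with f* = f(x*), and let β ∈ [0,1). Let {x_k}, {y_k} be generated by Nesterov's iteration with constant step-sizes: y_{k+1} = x_k - (1/L)∇f(x_k), x_{k+1} = y_{k+1} + β(y_{k+1} - y_k), initialized so that x_{-1} = x_0 and y_0 = x_0. Then for all T ∈ ℕ, the Cesàro average x̄_T = (1/(T+1)) Σ_{k=0}^{T} x_k satisfies f(x̄_T) - f* ≤ (1/(T+1)) · ( (β/(1-β))(f(x_0) - f*) + (L(1-β)/2)‖x_0 - x*‖² ). -/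
/-!
The auxiliary point `z k = (x k - β y k) / (1 - β)` turns the accelerated iteration into a plain
gradient step, `z (k + 1) = z k - (1 / (L (1 - β))) ∇f (x k)`, with `z 0 = x 0`. Expanding
`‖z (k + 1) - x*‖²` and writing `z k - x* = (x k - x*) + (β / (1 - β)) (x k - y k)`, the inner
products with the gradient are bounded below by the gradient inequality at `y k` and by its
smooth strengthening `f x* ≥ f x + ⟪∇f x, x* - x⟫ + ‖∇f x‖² / (2L)` (`nesterov_gradient_min`).
The remaining multiple of `‖∇f (x k)‖²` is exactly absorbed by the descent
`f (y (k + 1)) ≤ f (x k) - ‖∇f (x k)‖² / (2L)`. Thus the potential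
`(L (1 - β) / 2) ‖z k - x*‖² + (β / (1 - β)) (f (y k) - f x*)` drops by at least `f (x k) - f x*`
at each step (`nesterov_potential_step`); telescoping and Jensen's inequality conclude.
-/

open scoped RealInnerProductSpace

section
variable {E : Type*} [NormedAddCommGroup E] [InnerProductSpace ℝ E] [CompleteSpace E]

theorem nesterov_hasDerivAt_line {f : E → ℝ} {f' : E → E} (hgrad : ∀ z, HasGradientAt f (f' z) z)
    (a d : E) (t : ℝ) :
    HasDerivAt (fun s : ℝ => f (a + s • d)) ⟪f' (a + t • d), d⟫ t := by
  have h1 : HasDerivAt (fun s : ℝ => a + s • d) d t := by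
    simpa using ((hasDerivAt_id t).smul_const d).const_add a
  have h2 := (hgrad (a + t • d)).hasFDerivAt.comp_hasDerivAt t h1
  rw [InnerProductSpace.toDual_apply_apply] at h2
  exact h2

/-- First-order characterization of convexity. -/
theorem nesterov_gradient_ineq {f : E → ℝ} {f' : E → E} (hconv : ConvexOn ℝ Set.univ f)
    (hgrad : ∀ z, HasGradientAt f (f' z) z) (a b : E) :
    f a + ⟪f' a, b - a⟫ ≤ f b := by
  have hc : ConvexOn ℝ Set.univ (fun s : ℝ => f (a + s • (b - a))) := by
    refine ⟨convex_univ, fun s _ t _ p q hp hq hpq => ?_⟩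
    have := hconv.2 (Set.mem_univ (a + s • (b - a))) (Set.mem_univ (a + t • (b - a))) hp hq hpq
    convert this using 2
    obtain rfl : p = 1 - q := by linarith
    simp only [smul_eq_mul]
    module
  have h := hc.le_slope_of_hasDerivAt (Set.mem_univ 0) (Set.mem_univ 1) one_pos
    (nesterov_hasDerivAt_line hgrad a (b - a) 0)
  simp [slope_def_field] at h
  linarith

/-- The descent lemma: a function with `L`-Lipschitz gradient lies below its quadratic model. -/
theorem nesterov_descent {f : E → ℝ} {f' : E → E} {L : ℝ}
    (hgrad : ∀ z, HasGradientAt f (f' z) z) (hlip : ∀ z w, ‖f' z - f' w‖ ≤ L * ‖z - w‖)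
    (a d : E) :
    f (a + d) ≤ f a + ⟪f' a, d⟫ + L / 2 * ‖d‖ ^ 2 := by
  have hd : ∀ t : ℝ, HasDerivAt
      (fun s : ℝ => f (a + s • d) - (s * ⟪f' a, d⟫ + L / 2 * ‖d‖ ^ 2 * s ^ 2))
      (⟪f' (a + t • d), d⟫ - (⟪f' a, d⟫ + L * ‖d‖ ^ 2 * t)) t := by
    intro t
    refine (nesterov_hasDerivAt_line hgrad a d t).sub ?_
    have h1 := (hasDerivAt_id t).mul_const ⟪f' a, d⟫
    have h2 := (hasDerivAt_pow 2 t).const_mul (L / 2 * ‖d‖ ^ 2)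
    refine (h1.add h2).congr_deriv ?_
    push_cast
    ring
  have hanti : AntitoneOn
      (fun s : ℝ => f (a + s • d) - (s * ⟪f' a, d⟫ + L / 2 * ‖d‖ ^ 2 * s ^ 2)) (Set.Icc 0 1) := by
    refine antitoneOn_of_deriv_nonpos (convex_Icc 0 1)
      (fun t _ => (hd t).continuousAt.continuousWithinAt)
      (fun t _ => (hd t).differentiableAt.differentiableWithinAt) fun t ht => ?_
    rw [interior_Icc] at ht
    rw [(hd t).deriv]
    have h1 : ⟪f' (a + t • d) - f' a, d⟫ ≤ ‖f' (a + t • d) - f' a‖ * ‖d‖ :=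
      real_inner_le_norm _ _
    have h2 := mul_le_mul_of_nonneg_right (hlip (a + t • d) a) (norm_nonneg d)
    rw [add_sub_cancel_left, norm_smul, Real.norm_of_nonneg ht.1.le] at h2
    rw [inner_sub_left] at h1
    nlinarith
  have h := hanti (Set.left_mem_Icc.2 zero_le_one) (Set.right_mem_Icc.2 zero_le_one) zero_le_one
  simp at h
  linarith

/-- The gradient inequality at a minimizer, strengthened by smoothness: compare the quadratic
upper model at `xstar` with the affine lower model at `a`, both taken at `xstar + f' a / L`. -/
theorem nesterov_gradient_min {f : E → ℝ} {f' : E → E} {L : ℝ} (hL : 0 < L)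
    (hconv : ConvexOn ℝ Set.univ f)
    (hgrad : ∀ z, HasGradientAt f (f' z) z) (hlip : ∀ z w, ‖f' z - f' w‖ ≤ L * ‖z - w‖)
    {xstar : E} (hmin : ∀ z, f xstar ≤ f z) (a : E) :
    f a - f xstar + ‖f' a‖ ^ 2 / (2 * L) ≤ ⟪f' a, a - xstar⟫ := by
  have h0 : f' xstar = 0 := by
    have h := IsLocalMin.hasFDerivAt_eq_zero (Filter.Eventually.of_forall hmin)
      (hgrad xstar).hasFDerivAt
    simpa using h
  have h1 := nesterov_descent hgrad hlip xstar ((1 / L) • f' a)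
  have h2 := nesterov_gradient_ineq hconv hgrad a (xstar + (1 / L) • f' a)
  have e : xstar + (1 / L) • f' a - a = (1 / L) • f' a - (a - xstar) := by abel
  rw [e, inner_sub_right, inner_smul_right, real_inner_self_eq_norm_sq] at h2
  rw [h0, inner_zero_left, norm_smul, Real.norm_of_nonneg (by positivity)] at h1
  have e1 : L / 2 * (1 / L * ‖f' a‖) ^ 2 = ‖f' a‖ ^ 2 / (2 * L) := by field_simp
  have e2 : 1 / L * ‖f' a‖ ^ 2 = 2 * (‖f' a‖ ^ 2 / (2 * L)) := by field_simp
  linarith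

/-- One-step decrease of the potential, where `a = x k`, `b = y k`, and the new point is
`y (k + 1) = a - f' a / L`. The auxiliary point is `z k = a + (β / (1 - β)) (a - b)`. -/
theorem nesterov_potential_step {f : E → ℝ} {f' : E → E} {L : ℝ} (hL : 0 < L)
    (hconv : ConvexOn ℝ Set.univ f)
    (hgrad : ∀ z, HasGradientAt f (f' z) z) (hlip : ∀ z w, ‖f' z - f' w‖ ≤ L * ‖z - w‖)
    {xstar : E} (hmin : ∀ z, f xstar ≤ f z) {β : ℝ} (hβ0 : 0 ≤ β) (hβ1 : β < 1) (a b z : E)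
    (hz : z = a + (β / (1 - β)) • (a - b)) :
    L * (1 - β) / 2 * ‖z - (1 / (L * (1 - β))) • f' a - xstar‖ ^ 2
        + β / (1 - β) * (f (a - (1 / L) • f' a) - f xstar) + (f a - f xstar) ≤
      L * (1 - β) / 2 * ‖z - xstar‖ ^ 2 + β / (1 - β) * (f b - f xstar) := by
  have hβ : 0 < 1 - β := by linarith
  have hγ : 0 ≤ β / (1 - β) := by positivity
  have h1 := nesterov_gradient_min hL hconv hgrad hlip hmin a
  have h2 : f a - f b ≤ ⟪f' a, a - b⟫ := by
    have h := nesterov_gradient_ineq hconv hgrad a b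
    rw [← neg_sub a b, inner_neg_right] at h
    linarith
  have h3 : f (a - (1 / L) • f' a) ≤ f a - ‖f' a‖ ^ 2 / (2 * L) := by
    have h := nesterov_descent hgrad hlip a (-((1 / L) • f' a))
    rw [← sub_eq_add_neg, inner_neg_right, inner_smul_right, real_inner_self_eq_norm_sq,
      norm_neg, norm_smul, Real.norm_of_nonneg (by positivity)] at h
    have e1 : L / 2 * (1 / L * ‖f' a‖) ^ 2 = ‖f' a‖ ^ 2 / (2 * L) := by field_simp
    have e2 : 1 / L * ‖f' a‖ ^ 2 = 2 * (‖f' a‖ ^ 2 / (2 * L)) := by field_simp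
    linarith
  have hin : ⟪z - xstar, f' a⟫ = ⟪f' a, a - xstar⟫ + β / (1 - β) * ⟪f' a, a - b⟫ := by
    rw [hz, real_inner_comm, ← inner_smul_right, ← inner_add_right]
    congr 1
    abel
  have hexp : L * (1 - β) / 2 * ‖z - (1 / (L * (1 - β))) • f' a - xstar‖ ^ 2 =
      L * (1 - β) / 2 * ‖z - xstar‖ ^ 2 - ⟪z - xstar, f' a⟫
        + (1 + β / (1 - β)) * (‖f' a‖ ^ 2 / (2 * L)) := by
    rw [sub_right_comm, norm_sub_sq_real, inner_smul_right, norm_smul,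
      Real.norm_of_nonneg (by positivity)]
    field_simp
    ring
  rw [hexp, hin]
  have h2' := mul_le_mul_of_nonneg_left h2 hγ
  have h3' := mul_le_mul_of_nonneg_left h3 hγ
  linarith

end

/-- Theorem 3: Nesterov's method with constant step-sizes on F_L^{1,1}; the Cesàro
average of the iterates converges at rate O(1/T). -/
theorem nesterov_constant_step_cesaro
    {n : ℕ} (f : EuclideanSpace ℝ (Fin n) → ℝ)
    (f' : EuclideanSpace ℝ (Fin n) → EuclideanSpace ℝ (Fin n))
    (L : ℝ) (hL : 0 < L)
    (hconv : ConvexOn ℝ Set.univ f)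
    (hC1 : ContDiff ℝ 1 f)
    (hgrad : ∀ z, HasGradientAt f (f' z) z)
    (hlip : ∀ z w, ‖f' z - f' w‖ ≤ L * ‖z - w‖)
    (xstar : EuclideanSpace ℝ (Fin n)) (hmin : ∀ z, f xstar ≤ f z)
    (β : ℝ) (hβ0 : 0 ≤ β) (hβ1 : β < 1)
    (x y : ℤ → EuclideanSpace ℝ (Fin n))
    (hinitx : x (-1) = x 0) (hinity : y 0 = x 0)
    (hitery : ∀ k : ℤ, 0 ≤ k → y (k + 1) = x k - (1 / L) • f' (x k))
    (hiterx : ∀ k : ℤ, 0 ≤ k → x (k + 1) = y (k + 1) + β • (y (k + 1) - y k))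
    (T : ℕ) :
    f ((1 / (T + 1) : ℝ) • ∑ k ∈ Finset.range (T + 1), x (k : ℤ)) - f xstar ≤
      1 / (T + 1) * (β / (1 - β) * (f (x 0) - f xstar) +
        L * (1 - β) / 2 * ‖x 0 - xstar‖ ^ 2) := by
  have hβ : 0 < 1 - β := by linarith
  have key : ∀ N : ℕ,
      L * (1 - β) / 2 * ‖x N + (β / (1 - β)) • (x N - y N) - xstar‖ ^ 2
        + β / (1 - β) * (f (y N) - f xstar)
        + ∑ k ∈ Finset.range N, (f (x (k : ℤ)) - f xstar) ≤
      β / (1 - β) * (f (x 0) - f xstar) + L * (1 - β) / 2 * ‖x 0 - xstar‖ ^ 2 := by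
    intro N
    induction N with
    | zero =>
      simp [hinity]
      linarith
    | succ N ih =>
      have hN : (0 : ℤ) ≤ N := Int.natCast_nonneg N
      have h := nesterov_potential_step hL hconv hgrad hlip hmin hβ0 hβ1 (x N) (y N) _ rfl
      -- the auxiliary point follows a gradient step of length `1 / (L (1 - β))`
      have hz : x (N + 1) + (β / (1 - β)) • (x (N + 1) - y (N + 1)) =
          x N + (β / (1 - β)) • (x N - y N) - (1 / (L * (1 - β))) • f' (x N) := by
        rw [hiterx N hN, hitery N hN]
        match_scalars <;> field_simp <;> ring
      rw [← hz, ← hitery N hN] at h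
      rw [Finset.sum_range_succ]
      push_cast
      linarith
  have hT : (0 : ℝ) < T + 1 := by positivity
  have hsum : ∑ k ∈ Finset.range (T + 1), (f (x (k : ℤ)) - f xstar) ≤
      β / (1 - β) * (f (x 0) - f xstar) + L * (1 - β) / 2 * ‖x 0 - xstar‖ ^ 2 := by
    have h := key (T + 1)
    have h1 : 0 ≤ β / (1 - β) * (f (y ((T + 1 : ℕ) : ℤ)) - f xstar) :=
      mul_nonneg (by positivity) (sub_nonneg.2 (hmin _))
    have h2 : 0 ≤ L * (1 - β) / 2 * ‖x ((T + 1 : ℕ) : ℤ) + (β / (1 - β)) •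
        (x ((T + 1 : ℕ) : ℤ) - y ((T + 1 : ℕ) : ℤ)) - xstar‖ ^ 2 := by positivity
    linarith
  have hJ : f ((1 / (T + 1) : ℝ) • ∑ k ∈ Finset.range (T + 1), x (k : ℤ)) ≤
      1 / (T + 1) * ∑ k ∈ Finset.range (T + 1), f (x (k : ℤ)) := by
    have h := hconv.map_sum_le (t := Finset.range (T + 1)) (w := fun _ => (1 / (T + 1) : ℝ))
      (p := fun k => x (k : ℤ)) (fun _ _ => by positivity)
      (by simp; field_simp) (fun _ _ => Set.mem_univ _)
    simpa only [← Finset.smul_sum, smul_eq_mul, ← Finset.mul_sum] using h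
  have hs : 1 / (T + 1 : ℝ) * ∑ k ∈ Finset.range (T + 1), (f (x (k : ℤ)) - f xstar) =
      1 / (T + 1) * ∑ k ∈ Finset.range (T + 1), f (x (k : ℤ)) - f xstar := by
    rw [Finset.sum_sub_distrib]
    simp
    field_simp
  have := mul_le_mul_of_nonneg_left hsum (by positivity : (0 : ℝ) ≤ 1 / (T + 1))
  linarith
end

section
/- Let f : ℝ^n → ℝ be continuously differentiable, μ-strongly convex, and have L-Lipschitz continuous gradient with 0 < μ ≤ L, and let x* be its unique minimizer with f* = f(x*). Assume α ∈ (0, 2/L) and 0 ≤ β < (1/2)( μα/2 + √( μ²α²/4 + 4(1 - αL/2) ) ). Let {x_k} be generated by the Heavy-ball iteration x_{k+1} = x_k - α∇f(x_k) + β(x_k - x_{k-1}) with x_{-1} = x_0. Then there exist q ∈ [0,1) and C ≥ 0 such that for all k ∈ ℕ, f(x_k) - f* ≤ C q^k (f(x_0) - f*); in particular f(x_k) → f* linearly and x_k converges to x*. -/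
/-!
Write `F k = f (x k) - f xstar`, `d k = x k - x (k - 1)` and `D k = ‖d k‖ ^ 2`. Since
`d (k + 1) = -α ∇f(x k) + β d k`, the descent lemma (`descent_lemma`) and the expansion of
`D (k + 1)` bound `F (k + 1) + (1/α - L/2 - ε/(2α)) D (k + 1)` by
`F k - (εα/2) ‖∇f(x k)‖² - (1-ε) β ⟪∇f(x k), d k⟫ + (1-ε/2) (β²/α) D k`.
Strong convexity between `x k` and `x (k - 1)` controls the inner product, and the
Polyak–Łojasiewicz inequality (`polyak_lojasiewicz`) turns the gradient term into `F k`. The result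
(`heavy_ball_step`) is a recursion
`F (k+1) + θ D (k+1) ≤ (1 - b - εαμ) F k + b F (k-1) + c D k`, with `b = (1-ε) β`.

At `ε = 0` the inequality `c < θ` reads `β² - (μα/2) β < 1 - αL/2`, which is the assumed bound on
`β`; hence it persists for some small `ε > 0` (`exists_perturbation`). Then
`V k = F k + (b + εαμ/2) F (k-1) + θ D k` contracts by a factor `q < 1` at each step
(`contraction_factor`), and `V 0` is a multiple of `F 0` because `x (-1) = x 0`. Convergence of the
iterates follows from `(μ/2) ‖x k - xstar‖² ≤ F k`.
-/

open scoped RealInnerProductSpace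

section HeavyBall

variable {E : Type*} [NormedAddCommGroup E] [InnerProductSpace ℝ E]

/-- Quadratic upper bound for a function with `L`-Lipschitz gradient. -/
lemma descent_lemma [CompleteSpace E] (f : E → ℝ) (f' : E → E) (L : ℝ)
    (hgrad : ∀ z, HasGradientAt f (f' z) z)
    (hlip : ∀ z w, ‖f' z - f' w‖ ≤ L * ‖z - w‖) (z d : E) :
    f (z + d) ≤ f z + ⟪f' z, d⟫ + L / 2 * ‖d‖ ^ 2 := by
  -- The gap between the two sides along the segment, whose derivative is nonnegative.
  let ψ : ℝ → ℝ := fun t => t * ⟪f' z, d⟫ + L / 2 * ‖d‖ ^ 2 * t ^ 2 - f (z + t • d)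
  have hψ : ∀ t, HasDerivAt ψ (⟪f' z, d⟫ + L * ‖d‖ ^ 2 * t - ⟪f' (z + t • d), d⟫) t := by
    intro t
    have h1 : HasDerivAt (fun t : ℝ => z + t • d) d t := by
      simpa using ((hasDerivAt_id t).smul_const d).const_add z
    have h2 : HasDerivAt (fun t : ℝ => f (z + t • d)) ⟪f' (z + t • d), d⟫ t := by
      have h := (hgrad (z + t • d)).hasFDerivAt.comp_hasDerivAt t h1
      rw [InnerProductSpace.toDual_apply_apply] at h
      exact h
    have h3 : HasDerivAt (fun t : ℝ => t * ⟪f' z, d⟫ + L / 2 * ‖d‖ ^ 2 * t ^ 2)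
        (⟪f' z, d⟫ + L * ‖d‖ ^ 2 * t) t := by
      have h4 := ((hasDerivAt_id t).mul_const ⟪f' z, d⟫).add
        ((hasDerivAt_pow 2 t).const_mul (L / 2 * ‖d‖ ^ 2))
      refine h4.congr_deriv ?_
      norm_num
      ring
    exact h3.sub h2
  have hmono : MonotoneOn ψ (Set.Icc 0 1) := by
    apply monotoneOn_of_deriv_nonneg (convex_Icc 0 1)
    · exact fun t _ => (hψ t).continuousAt.continuousWithinAt
    · exact fun t _ => (hψ t).differentiableAt.differentiableWithinAt
    · intro t ht
      rw [interior_Icc] at ht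
      rw [(hψ t).deriv]
      have h5 : ⟪f' (z + t • d) - f' z, d⟫ ≤ L * ‖d‖ ^ 2 * t := by
        calc ⟪f' (z + t • d) - f' z, d⟫ ≤ ‖f' (z + t • d) - f' z‖ * ‖d‖ :=
              real_inner_le_norm _ _
          _ ≤ (L * ‖z + t • d - z‖) * ‖d‖ := by gcongr; exact hlip _ _
          _ = L * ‖d‖ ^ 2 * t := by
              rw [add_sub_cancel_left, norm_smul, Real.norm_of_nonneg ht.1.le]; ring
      rw [inner_sub_left] at h5
      linarith
  have h := hmono (Set.left_mem_Icc.2 zero_le_one) (Set.right_mem_Icc.2 zero_le_one) zero_le_one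
  simp [ψ] at h
  linarith

/-- Strong convexity implies the gradient domination `2 μ (f z - f w) ≤ ‖∇f z‖ ^ 2`. -/
lemma polyak_lojasiewicz (f : E → ℝ) (f' : E → E) (μ : ℝ) (hμ : 0 < μ)
    (hstrong : ∀ z w, μ / 2 * ‖z - w‖ ^ 2 ≤ f w - f z - ⟪f' z, w - z⟫) (z w : E) :
    2 * μ * (f z - f w) ≤ ‖f' z‖ ^ 2 := by
  have h := hstrong z w
  -- Complete the square in `w - z`.
  have h1 : 0 ≤ ‖f' z + μ • (w - z)‖ ^ 2 := by positivity
  rw [norm_add_sq_real, norm_smul, inner_smul_right, Real.norm_of_nonneg hμ.le,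
    norm_sub_rev w z] at h1
  nlinarith

/-- One Heavy-ball step from `z`, with momentum `d` and new displacement `e`. -/
lemma heavy_ball_step [CompleteSpace E] (f : E → ℝ) (f' : E → E) (μ L : ℝ) (hμ : 0 < μ)
    (hgrad : ∀ z, HasGradientAt f (f' z) z)
    (hstrong : ∀ z w, μ / 2 * ‖z - w‖ ^ 2 ≤ f w - f z - ⟪f' z, w - z⟫)
    (hlip : ∀ z w, ‖f' z - f' w‖ ≤ L * ‖z - w‖)
    (α β ε : ℝ) (hα : 0 < α) (hβ : 0 ≤ β) (hε0 : 0 < ε) (hε1 : ε < 1)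
    (m z d e : E) (he : e = β • d - α • f' z) :
    (f (z + e) - f m) + (1 / α - L / 2 - ε / (2 * α)) * ‖e‖ ^ 2 ≤
      (1 - (1 - ε) * β - ε * α * μ) * (f z - f m) + (1 - ε) * β * (f (z - d) - f m) +
        ((1 - ε / 2) * (β ^ 2 / α) - (1 - ε) * β * μ / 2) * ‖d‖ ^ 2 := by
  have h1 := descent_lemma f f' L hgrad hlip z e
  have h2 := polyak_lojasiewicz f f' μ hμ hstrong z m
  have h3 := hstrong z (z - d)
  rw [sub_sub_cancel, sub_sub_cancel_left, inner_neg_right] at h3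
  have h4 : ⟪f' z, e⟫ = β * ⟪f' z, d⟫ - α * ‖f' z‖ ^ 2 := by
    rw [he, inner_sub_right, inner_smul_right, inner_smul_right, real_inner_self_eq_norm_sq]
  have h5 : ‖e‖ ^ 2 = β ^ 2 * ‖d‖ ^ 2 - 2 * α * β * ⟪f' z, d⟫ + α ^ 2 * ‖f' z‖ ^ 2 := by
    rw [he, norm_sub_sq_real, norm_smul, norm_smul, inner_smul_left, inner_smul_right,
      real_inner_comm, mul_pow, mul_pow, Real.norm_eq_abs, Real.norm_eq_abs, sq_abs, sq_abs]
    simp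
    ring
  have h6 : (1 / α - ε / (2 * α)) * ‖e‖ ^ 2 =
      (1 - ε / 2) * (β ^ 2 / α * ‖d‖ ^ 2 - 2 * β * ⟪f' z, d⟫ + α * ‖f' z‖ ^ 2) := by
    rw [h5]
    field_simp
  have h7 := mul_le_mul_of_nonneg_left h3 (mul_nonneg (sub_nonneg.2 hε1.le) hβ)
  have h8 := mul_le_mul_of_nonneg_left h2 (by positivity : 0 ≤ ε * α / 2)
  rw [h4] at h1
  linarith

end HeavyBall

/-- The bound on `β` makes the coefficient of `‖d k‖ ^ 2` strictly smaller than that of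
`‖d (k+1)‖ ^ 2` in the unperturbed recursion, so the same holds for a small `ε > 0`. -/
lemma exists_perturbation (μ L α β : ℝ) (hμ : 0 < μ) (hL : 0 < L)
    (hα0 : 0 < α) (hα1 : α < 2 / L) (hβ0 : 0 ≤ β)
    (hβ1 : β < 1 / 2 * (μ * α / 2 +
      Real.sqrt (μ ^ 2 * α ^ 2 / 4 + 4 * (1 - α * L / 2)))) :
    ∃ ε : ℝ, 0 < ε ∧ ε < 1 ∧ 0 < 1 / α - L / 2 - ε / (2 * α) ∧
      (1 - ε / 2) * (β ^ 2 / α) - (1 - ε) * β * μ / 2 < 1 / α - L / 2 - ε / (2 * α) := by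
  have hαL : 0 < 1 - α * L / 2 := by
    rw [lt_div_iff₀ hL] at hα1
    linarith
  have hdiv : 1 / α - L / 2 = (1 - α * L / 2) / α := by field_simp
  have hθ : 0 < 1 / α - L / 2 := hdiv ▸ div_pos hαL hα0
  -- `β` lies below the larger root of `t ^ 2 - (μ α / 2) t - (1 - α L / 2)`.
  have hquad : β ^ 2 - μ * α / 2 * β < 1 - α * L / 2 := by
    set S := Real.sqrt (μ ^ 2 * α ^ 2 / 4 + 4 * (1 - α * L / 2)) with hS
    have hSsq : S ^ 2 = μ ^ 2 * α ^ 2 / 4 + 4 * (1 - α * L / 2) :=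
      Real.sq_sqrt (by positivity)
    have hSlb : μ * α / 2 < S := by
      apply Real.lt_sqrt_of_sq_lt
      nlinarith
    nlinarith [mul_pos (by linarith : 0 < S + μ * α / 2 - 2 * β)
      (by linarith : 0 < S - μ * α / 2 + 2 * β)]
  have hc : β ^ 2 / α - β * μ / 2 < 1 / α - L / 2 := by
    have : β ^ 2 / α - β * μ / 2 = (β ^ 2 - μ * α / 2 * β) / α := by field_simp
    rw [this, hdiv]
    gcongr
  have e1 : ∀ᶠ ε : ℝ in nhds 0, ε < 1 := eventually_lt_nhds one_pos
  have e2 : ∀ᶠ ε : ℝ in nhds 0, 0 < 1 / α - L / 2 - ε / (2 * α) :=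
    ContinuousAt.eventually_lt (by fun_prop) (by fun_prop) (by simpa using hθ)
  have e3 : ∀ᶠ ε : ℝ in nhds 0,
      (1 - ε / 2) * (β ^ 2 / α) - (1 - ε) * β * μ / 2 < 1 / α - L / 2 - ε / (2 * α) :=
    ContinuousAt.eventually_lt (by fun_prop) (by fun_prop) (by simpa using hc)
  obtain ⟨ε, ⟨⟨h1, h2⟩, h3⟩, h0⟩ :=
    ((((e1.and e2).and e3).filter_mono nhdsWithin_le_nhds).and
      (self_mem_nhdsWithin : Set.Ioi (0 : ℝ) ∈ nhdsWithin 0 (Set.Ioi 0))).exists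
  exact ⟨ε, h0, h1, h2, h3⟩

/-- Shifting the weight of `F (k-1)` from `b` to `b + δ` makes all three coefficients of the
recursion contract by a common factor. -/
lemma contraction_factor (b δ θ c : ℝ) (hb : 0 ≤ b) (hδ : 0 < δ) (hθ : 0 < θ) (hc : c < θ) :
    ∃ q : ℝ, 0 ≤ q ∧ q < 1 ∧ 1 - δ ≤ q ∧ b ≤ q * (b + δ) ∧ c ≤ q * θ := by
  have hbδ : 0 < b + δ := by linarith
  refine ⟨max (max 0 (1 - δ)) (max (b / (b + δ)) (c / θ)), ?_, ?_, ?_, ?_, ?_⟩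
  · exact (le_max_left _ _).trans (le_max_left _ _)
  · refine max_lt (max_lt one_pos (by linarith)) (max_lt ?_ ?_)
    · rw [div_lt_one hbδ]; linarith
    · rwa [div_lt_one hθ]
  · exact (le_max_right _ _).trans (le_max_left _ _)
  · rw [← div_le_iff₀ hbδ]
    exact (le_max_left _ _).trans (le_max_right _ _)
  · rw [← div_le_iff₀ hθ]
    exact (le_max_right _ _).trans (le_max_right _ _)

/-- Theorem 4: global linear convergence of the Heavy-ball method for strongly
convex objectives with Lipschitz-continuous gradient. -/
theorem heavy_ball_strongly_convex_linear_rate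
    {n : ℕ} (f : EuclideanSpace ℝ (Fin n) → ℝ)
    (f' : EuclideanSpace ℝ (Fin n) → EuclideanSpace ℝ (Fin n))
    (μ L : ℝ) (hμ : 0 < μ) (hμL : μ ≤ L)
    (hC1 : ContDiff ℝ 1 f)
    (hgrad : ∀ z, HasGradientAt f (f' z) z)
    (hstrong : ∀ z w, μ / 2 * ‖z - w‖ ^ 2 ≤ f w - f z - ⟪f' z, w - z⟫)
    (hlip : ∀ z w, ‖f' z - f' w‖ ≤ L * ‖z - w‖)
    (xstar : EuclideanSpace ℝ (Fin n)) (hmin : ∀ z, f xstar ≤ f z)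
    (α β : ℝ) (hα0 : 0 < α) (hα1 : α < 2 / L)
    (hβ0 : 0 ≤ β)
    (hβ1 : β < 1 / 2 * (μ * α / 2 +
      Real.sqrt (μ ^ 2 * α ^ 2 / 4 + 4 * (1 - α * L / 2))))
    (x : ℤ → EuclideanSpace ℝ (Fin n))
    (hinit : x (-1) = x 0)
    (hiter : ∀ k : ℤ, 0 ≤ k →
      x (k + 1) = x k - α • f' (x k) + β • (x k - x (k - 1))) :
    ∃ q C : ℝ, 0 ≤ q ∧ q < 1 ∧ 0 ≤ C ∧
      (∀ k : ℕ, f (x (k : ℤ)) - f xstar ≤ C * q ^ k * (f (x 0) - f xstar)) ∧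
      Filter.Tendsto (fun k : ℕ => x (k : ℤ)) Filter.atTop (nhds xstar) := by
  obtain ⟨ε, hε0, hε1, hθ, hc⟩ :=
    exists_perturbation μ L α β hμ (hμ.trans_le hμL) hα0 hα1 hβ0 hβ1
  have hb : 0 ≤ (1 - ε) * β := mul_nonneg (sub_nonneg.2 hε1.le) hβ0
  have hδ : 0 < ε * α * μ / 2 := by positivity
  obtain ⟨q, hq0, hq1, hqδ, hqb, hqc⟩ := contraction_factor _ _ _ _ hb hδ hθ hc
  have hF : ∀ z, 0 ≤ f z - f xstar := fun z => sub_nonneg.2 (hmin z)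
  have hV : ∀ k : ℕ,
      (f (x k) - f xstar) + ((1 - ε) * β + ε * α * μ / 2) * (f (x ((k : ℤ) - 1)) - f xstar) +
        (1 / α - L / 2 - ε / (2 * α)) * ‖x k - x ((k : ℤ) - 1)‖ ^ 2 ≤
      (1 + ((1 - ε) * β + ε * α * μ / 2)) * q ^ k * (f (x 0) - f xstar) := by
    intro k
    induction k with
    | zero =>
      simp only [Nat.cast_zero, zero_sub, hinit, sub_self, norm_zero, pow_zero]
      linarith
    | succ k ih =>
      have hit := hiter k (Int.natCast_nonneg k)
      have hstep := heavy_ball_step f f' μ L hμ hgrad hstrong hlip α β ε hα0 hβ0 hε0 hε1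
        xstar (x k) (x k - x ((k : ℤ) - 1)) (x ((k : ℤ) + 1) - x k) (by rw [hit]; abel)
      rw [add_sub_cancel, sub_sub_cancel] at hstep
      rw [Nat.cast_add, Nat.cast_one, add_sub_cancel_right, pow_succ q k]
      have h1 := mul_le_mul_of_nonneg_left ih hq0
      have h2 := mul_le_mul_of_nonneg_right hqδ (hF (x k))
      have h3 := mul_le_mul_of_nonneg_right hqb (hF (x ((k : ℤ) - 1)))
      have h4 := mul_le_mul_of_nonneg_right hqc (sq_nonneg ‖x k - x ((k : ℤ) - 1)‖)
      linarith
  have hrate : ∀ k : ℕ, f (x (k : ℤ)) - f xstar ≤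
      (1 + ((1 - ε) * β + ε * α * μ / 2)) * q ^ k * (f (x 0) - f xstar) := by
    intro k
    have h1 := mul_nonneg (add_nonneg hb hδ.le) (hF (x ((k : ℤ) - 1)))
    have h2 := mul_nonneg hθ.le (sq_nonneg ‖x k - x ((k : ℤ) - 1)‖)
    linarith [hV k]
  refine ⟨q, 1 + ((1 - ε) * β + ε * α * μ / 2), hq0, hq1, by linarith, hrate, ?_⟩
  have hgrad0 : f' xstar = 0 := by
    have h : IsLocalMin f xstar := Filter.Eventually.of_forall hmin
    simpa using h.hasFDerivAt_eq_zero (hgrad xstar).hasFDerivAt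
  have hgrowth : ∀ z, ‖z - xstar‖ ^ 2 ≤ 2 / μ * (f z - f xstar) := by
    intro z
    have h := hstrong xstar z
    rw [hgrad0, inner_zero_left, norm_sub_rev] at h
    rw [div_mul_eq_mul_div, le_div_iff₀ hμ]
    linarith
  have hlim : Filter.Tendsto (fun k : ℕ => 2 / μ *
      ((1 + ((1 - ε) * β + ε * α * μ / 2)) * q ^ k * (f (x 0) - f xstar)))
      Filter.atTop (nhds 0) := by
    simpa using (((tendsto_pow_atTop_nhds_zero_of_lt_one hq0 hq1).const_mul
      (1 + ((1 - ε) * β + ε * α * μ / 2))).mul_const (f (x 0) - f xstar)).const_mul (2 / μ)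
  have hsq : Filter.Tendsto (fun k : ℕ => ‖x (k : ℤ) - xstar‖ ^ 2) Filter.atTop (nhds 0) :=
    squeeze_zero (fun k => sq_nonneg _)
      (fun k => (hgrowth _).trans (mul_le_mul_of_nonneg_left (hrate k) (by positivity))) hlim
  rw [tendsto_iff_norm_sub_tendsto_zero]
  simpa [Real.sqrt_sq (norm_nonneg _)] using hsq.sqrt
end

section
/- Let f : ℝ^n → ℝ be continuously differentiable, μ-strongly convex, and have L-Lipschitz continuous gradient with 0 < μ ≤ L, let x* be its unique minimizer with f* = f(x*), and let {x_k} be generated by the Heavy-ball iteration x_{k+1} = x_k - α∇f(x_k) + β(x_k - x_{k-1}) with α > 0, β ≥ 0. Let θ ∈ (0,1) and assume (1-θ)/L ≤ α < 2(1-θ)/L. Then for every k, f(x_{k+1}) - f* + (Lθ/(2(1-θ)))‖x_{k+1} - x_k‖² ≤ (1 - 2αμ(1 - αL/(2(1-θ))) - β(αL/(1-θ) - 1))(f(x_k) - f*) + β(αL/(1-θ) - 1)(f(x_{k-1}) - f*) + (β/2)(μ(1 - αL/(1-θ)) + Lβ/(1-θ))‖x_k - x_{k-1}‖². -/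
/-!
Write `s = x (k + 1) - x k = -α g + β d` with `g = ∇f (x k)` and `d = x k - x (k - 1)`. The descent
lemma bounds `f (x (k + 1))` by `f (x k) + ⟪g, s⟫ + L / 2 * ‖s‖ ^ 2`; adding the extra kinetic term
turns the coefficient of `‖s‖ ^ 2` into `L / (2 * (1 - θ))`. After expanding in `g` and `d`, the
coefficient `-α (1 - α L / (2 (1 - θ)))` of `‖g‖ ^ 2` is nonpositive by the upper bound on `α`, so
the Polyak–Łojasiewicz inequality `‖g‖ ^ 2 ≥ 2 μ (f (x k) - f xstar)` applies; the coefficient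
`β (1 - α L / (1 - θ))` of `⟪g, d⟫` is nonpositive by the lower bound on `α`, so strong convexity
between `x k` and `x (k - 1)` applies. These two estimates give exactly the claimed coefficients.
-/


open scoped RealInnerProductSpace

/-- Descent lemma: along the segment, `f` minus its quadratic model has nonpositive derivative. -/
theorem descent_of_lipschitz_gradient {E : Type*} [NormedAddCommGroup E] [InnerProductSpace ℝ E]
    [CompleteSpace E] {f : E → ℝ} {f' : E → E} {L : ℝ}
    (hgrad : ∀ z, HasGradientAt f (f' z) z)
    (hlip : ∀ z w, ‖f' z - f' w‖ ≤ L * ‖z - w‖) (y s : E) :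
    f (y + s) ≤ f y + ⟪f' y, s⟫ + L / 2 * ‖s‖ ^ 2 := by
  have hd : ∀ t : ℝ, HasDerivAt
      (fun t : ℝ => f (y + t • s) - t * ⟪f' y, s⟫ - L / 2 * ‖s‖ ^ 2 * t ^ 2)
      (⟪f' (y + t • s), s⟫ - ⟪f' y, s⟫ - L * ‖s‖ ^ 2 * t) t := by
    intro t
    have h1 : HasDerivAt (fun t : ℝ => y + t • s) s t := by
      simpa using ((hasDerivAt_id t).smul_const s).const_add y
    have h2 : HasDerivAt (fun t : ℝ => f (y + t • s)) ⟪f' (y + t • s), s⟫ t := by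
      have h := (hgrad (y + t • s)).hasFDerivAt.comp_hasDerivAt t h1
      rw [InnerProductSpace.toDual_apply_apply] at h
      exact h
    have h3 := (h2.sub ((hasDerivAt_id t).mul_const ⟪f' y, s⟫)).sub
      ((hasDerivAt_pow 2 t).const_mul (L / 2 * ‖s‖ ^ 2))
    refine h3.congr_deriv ?_
    norm_num
    ring
  have hanti : AntitoneOn
      (fun t : ℝ => f (y + t • s) - t * ⟪f' y, s⟫ - L / 2 * ‖s‖ ^ 2 * t ^ 2)
      (Set.Icc 0 1) := by
    refine antitoneOn_of_deriv_nonpos (convex_Icc 0 1)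
      (fun t _ => (hd t).continuousAt.continuousWithinAt)
      (fun t _ => (hd t).differentiableAt.differentiableWithinAt) ?_
    intro t ht
    rw [interior_Icc] at ht
    rw [(hd t).deriv, ← inner_sub_left]
    have h1 := real_inner_le_norm (f' (y + t • s) - f' y) s
    have h2 := hlip (y + t • s) y
    rw [add_sub_cancel_left, norm_smul, Real.norm_of_nonneg ht.1.le] at h2
    have h3 := mul_le_mul_of_nonneg_right h2 (norm_nonneg s)
    linarith
  have h := hanti (Set.left_mem_Icc.2 zero_le_one) (Set.right_mem_Icc.2 zero_le_one) zero_le_one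
  simp only [one_smul, zero_smul, add_zero] at h
  linarith

/-- Polyak–Łojasiewicz inequality at a point `y`, from strong convexity between `y` and `w`. -/
theorem two_mul_sub_le_norm_sq_of_strong {E : Type*} [NormedAddCommGroup E]
    [InnerProductSpace ℝ E] {μ a b : ℝ} (hμ : 0 < μ) (g y w : E)
    (h : μ / 2 * ‖y - w‖ ^ 2 ≤ b - a - ⟪g, w - y⟫) :
    2 * μ * (a - b) ≤ ‖g‖ ^ 2 := by
  have h1 := real_inner_le_norm g (y - w)
  rw [← neg_sub y w, inner_neg_right] at h
  have h2 : a - b ≤ ‖g‖ * ‖y - w‖ - μ / 2 * ‖y - w‖ ^ 2 := by linarith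
  -- The bound is maximal over `‖y - w‖` at `‖g‖ / μ`: complete the square.
  nlinarith [sq_nonneg (‖g‖ - μ * ‖y - w‖), mul_le_mul_of_nonneg_left h2 hμ.le]

/-- Key per-step inequality in the proof of Theorem 4 (inequality (17) in the
paper), for strongly convex objectives with Lipschitz gradient. -/
theorem heavy_ball_strongly_convex_per_step
    {n : ℕ} (f : EuclideanSpace ℝ (Fin n) → ℝ)
    (f' : EuclideanSpace ℝ (Fin n) → EuclideanSpace ℝ (Fin n))
    (μ L : ℝ) (hμ : 0 < μ) (hμL : μ ≤ L)
    (hC1 : ContDiff ℝ 1 f)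
    (hgrad : ∀ z, HasGradientAt f (f' z) z)
    (hstrong : ∀ z w, μ / 2 * ‖z - w‖ ^ 2 ≤ f w - f z - ⟪f' z, w - z⟫)
    (hlip : ∀ z w, ‖f' z - f' w‖ ≤ L * ‖z - w‖)
    (xstar : EuclideanSpace ℝ (Fin n)) (hmin : ∀ z, f xstar ≤ f z)
    (α β θ : ℝ) (hα0 : 0 < α) (hβ0 : 0 ≤ β)
    (hθ0 : 0 < θ) (hθ1 : θ < 1)
    (hα1 : (1 - θ) / L ≤ α) (hα2 : α < 2 * (1 - θ) / L)
    (x : ℤ → EuclideanSpace ℝ (Fin n))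
    (hiter : ∀ k : ℤ,
      x (k + 1) = x k - α • f' (x k) + β • (x k - x (k - 1)))
    (k : ℤ) :
    f (x (k + 1)) - f xstar + L * θ / (2 * (1 - θ)) * ‖x (k + 1) - x k‖ ^ 2 ≤
      (1 - 2 * α * μ * (1 - α * L / (2 * (1 - θ))) - β * (α * L / (1 - θ) - 1)) *
          (f (x k) - f xstar) +
        β * (α * L / (1 - θ) - 1) * (f (x (k - 1)) - f xstar) +
        β / 2 * (μ * (1 - α * L / (1 - θ)) + L * β / (1 - θ)) *
          ‖x k - x (k - 1)‖ ^ 2 := by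
  have hL : 0 < L := hμ.trans_le hμL
  have hc : 0 < 1 - θ := sub_pos.2 hθ1
  have hlow : 0 ≤ α * L / (1 - θ) - 1 := by
    rw [div_le_iff₀ hL] at hα1
    rw [sub_nonneg, le_div_iff₀ hc]
    linarith
  have hupp : 0 ≤ 1 - α * L / (2 * (1 - θ)) := by
    rw [lt_div_iff₀ hL] at hα2
    rw [sub_nonneg, div_le_one (by positivity)]
    exact hα2.le
  set g := f' (x k) with hg
  set d := x k - x (k - 1) with hd
  have hs : x (k + 1) - x k = -(α • g) + β • d := by
    rw [hiter k]
    abel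
  have hdesc := descent_of_lipschitz_gradient hgrad hlip (x k) (x (k + 1) - x k)
  rw [add_sub_cancel, ← hg] at hdesc
  have hPL : 2 * μ * (f (x k) - f xstar) ≤ ‖g‖ ^ 2 :=
    two_mul_sub_le_norm_sq_of_strong hμ g (x k) xstar (hstrong _ _)
  have hsc := hstrong (x k) (x (k - 1))
  rw [← neg_sub (x k) (x (k - 1)), inner_neg_right, ← hg, ← hd] at hsc
  have hinner : ⟪g, x (k + 1) - x k⟫ = -α * ‖g‖ ^ 2 + β * ⟪g, d⟫ := by
    rw [hs, inner_add_right, inner_neg_right, real_inner_smul_right, real_inner_smul_right,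
      real_inner_self_eq_norm_sq]
    ring
  have hnorm : ‖x (k + 1) - x k‖ ^ 2 =
      α ^ 2 * ‖g‖ ^ 2 - 2 * α * β * ⟪g, d⟫ + β ^ 2 * ‖d‖ ^ 2 := by
    rw [hs, norm_add_sq_real, norm_neg, norm_smul, norm_smul, inner_neg_left,
      real_inner_smul_left, real_inner_smul_right, mul_pow, mul_pow, Real.norm_eq_abs,
      Real.norm_eq_abs, sq_abs, sq_abs]
    ring
  rw [hinner] at hdesc
  have h1 := mul_le_mul_of_nonneg_left hPL (mul_nonneg hα0.le hupp)
  have h2 := mul_le_mul_of_nonneg_left hsc (mul_nonneg hβ0 hlow)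
  have hcoef : L / 2 + L * θ / (2 * (1 - θ)) = L / (2 * (1 - θ)) := by
    field_simp
    ring
  have hsum : f (x (k + 1)) - f xstar + L * θ / (2 * (1 - θ)) * ‖x (k + 1) - x k‖ ^ 2 ≤
      f (x k) - f xstar + (-α * ‖g‖ ^ 2 + β * ⟪g, d⟫)
        + L / (2 * (1 - θ)) * ‖x (k + 1) - x k‖ ^ 2 := by
    rw [← hcoef, add_mul]
    linarith
  refine hsum.trans ?_
  rw [hnorm]
  -- With `r = L / (1 - θ)` every coefficient is polynomial, and `h1`, `h2` add up to the goal.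
  have e1 : L / (2 * (1 - θ)) = L / (1 - θ) / 2 := by field_simp
  have e2 : α * L / (2 * (1 - θ)) = α * (L / (1 - θ)) / 2 := by field_simp
  have e3 : α * L / (1 - θ) = α * (L / (1 - θ)) := by ring
  have e4 : L * β / (1 - θ) = β * (L / (1 - θ)) := by ring
  rw [e2] at h1
  rw [e3] at h2
  rw [e1, e2, e3, e4]
  linarith
end

section
/- Define g : ℝ → ℝ by g(x) = 50x + 45 for x < -1, g(x) = 5x for -1 ≤ x < 0, and g(x) = 50x for x ≥ 0, and let f : ℝ → ℝ be the antiderivative of g with f(0) = 0. Then g is continuous, f is differentiable with f' = g, f is 5-strongly convex, and f' is Lipschitz continuous with constant 50 (i.e., f belongs to S_{5,50}^{1,1}). -/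
/-! The one fact about the piecewise-linear `g` that matters is that all its chords have slope
between `5` and `50`. The upper bound makes `g` Lipschitz, hence continuous, so the fundamental
theorem of calculus gives `f' = g`. The lower bound says that `g t` lies above the line
`g x + 5 (t - x)` for `t ≥ x` and below it for `t ≤ x`; integrating this from `x` to `y` gives
strong convexity, whatever the order of `x` and `y`. -/

/-- Integrating a lower bound `m` on the slopes of `g` gives the strong convexity inequality
for its antiderivative. -/
lemma sq_le_integral_sub_of_slope_ge {g : ℝ → ℝ} (hc : Continuous g) {m : ℝ}
    (hm : ∀ x y : ℝ, x ≤ y → m * (y - x) ≤ g y - g x) (x y : ℝ) :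
    m / 2 * (y - x) ^ 2 ≤ (∫ t in x..y, g t) - g x * (y - x) := by
  have hline : Continuous fun t : ℝ => g x + m * (t - x) := by fun_prop
  have hint : ∫ t in x..y, (g x + m * (t - x)) = g x * (y - x) + m / 2 * (y - x) ^ 2 := by
    have hlin : Continuous fun t : ℝ => m * (t - x) := by fun_prop
    rw [intervalIntegral.integral_add intervalIntegrable_const
        (hlin.intervalIntegrable x y),
      intervalIntegral.integral_const_mul,
      intervalIntegral.integral_sub
        intervalIntegral.intervalIntegrable_id
        intervalIntegrable_const]
    simp only [intervalIntegral.integral_const, integral_id, smul_eq_mul]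
    ring
  rcases le_total x y with h | h
  · have := intervalIntegral.integral_mono_on (μ := MeasureTheory.volume) h (hline.intervalIntegrable x y)
      (hc.intervalIntegrable x y) fun t ht => by linarith [hm x t ht.1]
    linarith
  · have := intervalIntegral.integral_mono_on (μ := MeasureTheory.volume) h (hc.intervalIntegrable y x)
      (hline.intervalIntegrable y x) fun t ht => by linarith [hm t x ht.2]
    rw [intervalIntegral.integral_symm x y, intervalIntegral.integral_symm x y] at this
    linarith

/-- The counterexample function of Lessard et al.: g is the piecewise-linear
gradient, f its antiderivative with f(0) = 0; then f ∈ S_{5,50}^{1,1}. -/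
theorem lessard_counterexample_in_S_mu_L
    (g f : ℝ → ℝ)
    (hg : ∀ x : ℝ, g x = if x < -1 then 50 * x + 45
                         else if x < 0 then 5 * x else 50 * x)
    (hf : ∀ x : ℝ, f x = ∫ t in (0 : ℝ)..x, g t) :
    Continuous g ∧ f 0 = 0 ∧ (∀ x : ℝ, HasDerivAt f (g x) x) ∧
      (∀ x y : ℝ, 5 / 2 * |x - y| ^ 2 ≤ f y - f x - g x * (y - x)) ∧
      (∀ x y : ℝ, |g x - g y| ≤ 50 * |x - y|) := by
  have hslope : ∀ x y : ℝ, x ≤ y →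
      5 * (y - x) ≤ g y - g x ∧ g y - g x ≤ 50 * (y - x) := by
    intro x y h
    rw [hg x, hg y]
    constructor <;> split_ifs <;> linarith
  have hlip : ∀ x y : ℝ, |g x - g y| ≤ 50 * |x - y| := by
    intro x y
    rcases le_total x y with h | h
    · obtain ⟨h1, h2⟩ := hslope x y h
      rw [abs_sub_comm (g x), abs_sub_comm x, abs_of_nonneg (sub_nonneg.2 h),
        abs_of_nonneg (by linarith)]
      exact h2
    · obtain ⟨h1, h2⟩ := hslope y x h
      rw [abs_of_nonneg (sub_nonneg.2 h), abs_of_nonneg (by linarith)]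
      exact h2
  have hc : Continuous g :=
    (LipschitzWith.of_dist_le_mul (K := 50) fun x y => by
      simpa [Real.dist_eq] using hlip x y).continuous
  refine ⟨hc, by simp [hf], fun x => ?_, fun x y => ?_, hlip⟩
  · rw [funext hf]
    exact (hc.integral_hasStrictDerivAt 0 x).hasDerivAt
  · rw [hf x, hf y, intervalIntegral.integral_interval_sub_left
      (hc.intervalIntegrable 0 y) (hc.intervalIntegrable 0 x), sq_abs, sub_sq_comm]
    exact sq_le_integral_sub_of_slope_ge hc (fun a b h => (hslope a b h).1) x y
end

section
/- Let a₁, a₂, b ≥ 0 and c ∈ ℝ with b > 0, and set γ = max{ (-a₁ + √(a₁² + 4a₂))/2, c/b - a₁, 0 }. Let {A_k}_{k ≥ -1} and {B_k}_{k ≥ 0} be nonnegative real sequences satisfying A_{k+1} + b B_{k+1} ≤ a₁ A_k + a₂ A_{k-1} + c B_k for all k ≥ 0. Then for every t ≥ 0, A_{t+1} + γ A_t + b B_{t+1} ≤ (a₁ + γ)(A_t + γ A_{t-1} + b B_t). -/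
/-! Adding `γ A_t` to the recurrence bounds the left side by
`(a₁ + γ) A_t + a₂ A_{t-1} + c B_t`, so by nonnegativity of `A` and `B` it suffices that
`a₂ ≤ (a₁ + γ) γ` and `c ≤ (a₁ + γ) b`. The first holds because `γ` is nonnegative and at least
the larger root of `x² + a₁ x - a₂`, the second because `γ ≥ c / b - a₁`. -/

/-- The key step inequality in the proof of Lemma 1: with
γ = max{(-a₁+√(a₁²+4a₂))/2, c/b - a₁, 0}, the Lyapunov quantity
A_{t+1} + γ A_t + b B_{t+1} contracts by the factor a₁ + γ. -/
theorem hybrid_sequence_contraction_step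
    (A B : ℤ → ℝ) (a₁ a₂ b c : ℝ)
    (ha₁ : 0 ≤ a₁) (ha₂ : 0 ≤ a₂) (hb : 0 < b)
    (hA : ∀ k : ℤ, -1 ≤ k → 0 ≤ A k) (hB : ∀ k : ℤ, 0 ≤ k → 0 ≤ B k)
    (hrec : ∀ k : ℤ, 0 ≤ k →
      A (k + 1) + b * B (k + 1) ≤ a₁ * A k + a₂ * A (k - 1) + c * B k)
    (t : ℤ) (ht : 0 ≤ t) :
    A (t + 1) +
        max ((-a₁ + Real.sqrt (a₁ ^ 2 + 4 * a₂)) / 2) (max (c / b - a₁) 0) * A t +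
        b * B (t + 1) ≤
      (a₁ + max ((-a₁ + Real.sqrt (a₁ ^ 2 + 4 * a₂)) / 2) (max (c / b - a₁) 0)) *
        (A t +
          max ((-a₁ + Real.sqrt (a₁ ^ 2 + 4 * a₂)) / 2) (max (c / b - a₁) 0) *
            A (t - 1) +
          b * B t) := by
  set γ := max ((-a₁ + Real.sqrt (a₁ ^ 2 + 4 * a₂)) / 2) (max (c / b - a₁) 0) with hγ
  have hroot : (-a₁ + Real.sqrt (a₁ ^ 2 + 4 * a₂)) / 2 ≤ γ := le_max_left _ _
  have hcb : c / b - a₁ ≤ γ := (le_max_left _ _).trans (le_max_right _ _)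
  have hγ0 : 0 ≤ γ := (le_max_right _ _).trans (le_max_right _ _)
  have ha₂γ : a₂ ≤ (a₁ + γ) * γ := by
    have hsqrt : Real.sqrt (a₁ ^ 2 + 4 * a₂) ≤ 2 * γ + a₁ := by linarith
    have hsq := (Real.sqrt_le_left (by positivity)).mp hsqrt
    linarith
  have hcγ : c ≤ (a₁ + γ) * b := (div_le_iff₀ hb).mp (by linarith)
  have hA' := mul_le_mul_of_nonneg_right ha₂γ (hA (t - 1) (by linarith))
  have hB' := mul_le_mul_of_nonneg_right hcγ (hB t ht)
  linarith [hrec t ht]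
end
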